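/- Let m ∈ ℕ with m ≥ 1 and let A ⊆ ℕ^m. Then the following are equivalent: (1) there exist functions α : 𝒫_f(ℕ^ℕ) → ℕ and H : 𝒫_f(ℕ^ℕ) → 𝒫_f(ℕ) such that (a) whenever F, G ∈ 𝒫_f(ℕ^ℕ) and F ⊊ G one has max H(F) < min H(G), and (b) whenever n ≥ m, G₁ ⊊ G₂ ⊊ ⋯ ⊊ G_n in 𝒫_f(ℕ^ℕ), f_i ∈ G_i for each i ∈ {1,…,n}, and β₁ < β₂ < ⋯ < β_m are nonempty subsets of {1,…,n}, the tuple (Σ_{i∈β₁}(α(G_i)+Σ_{t∈H(G_i)}f_i(t)), …, Σ_{i∈β_m}(α(G_i)+Σ_{t∈H(G_i)}f_i(t))) belongs to A; (2) there exists an idempotent ultrafilter p ∈ 𝒥 such that A ∈ ⊗_{i=1}^m p. -/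

import Mathlib

namespace MultiCST

/-- The sum `p + q` of ultrafilters on ℕ: `A ∈ p + q` iff `{x : {y : x+y ∈ A} ∈ q} ∈ p`. -/
def uAdd (p q : Ultrafilter ℕ) : Ultrafilter ℕ :=
  p.bind fun x => q.map fun y => x + y

/-- `A ⊆ ℕ` is a J-set. -/
def IsJSet (A : Set ℕ) : Prop :=
  ∀ F : Finset (ℕ → ℕ), F.Nonempty →
    ∃ (a : ℕ) (β : Finset ℕ), β.Nonempty ∧ ∀ f ∈ F, a + ∑ t ∈ β, f t ∈ A

/-- `p ∈ 𝒥`: every member of `p` is a J-set. -/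
def MemJ (p : Ultrafilter ℕ) : Prop := ∀ A : Set ℕ, A ∈ p → IsJSet A

/-- `p` is an idempotent ultrafilter. -/
def IdempotentUF (p : Ultrafilter ℕ) : Prop := uAdd p p = p

/-- `p` is a minimal idempotent ultrafilter. -/
def IsMinimalIdempotent (p : Ultrafilter ℕ) : Prop :=
  IdempotentUF p ∧
    ∀ q : Ultrafilter ℕ, IdempotentUF q → uAdd q p = q → uAdd p q = q → q = p

/-- Tensor product `⊗_{i=1}^m p_i` of ultrafilters on ℕ, as an ultrafilter on `Fin m → ℕ`. -/
def tensor : ∀ m : ℕ, (Fin m → Ultrafilter ℕ) → Ultrafilter (Fin m → ℕ)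
  | 0, _ => pure fun i => i.elim0
  | m + 1, p =>
      (p 0).bind fun x => (tensor m fun i => p i.succ).map fun v => Fin.cons x v

/-- `f : ℕ → ℕ` is (given by) a polynomial with coefficients in ℕ and zero constant term. -/
def IsPolyZeroConst (f : ℕ → ℕ) : Prop :=
  ∃ P : Polynomial ℕ, P.coeff 0 = 0 ∧ ∀ x, f x = P.eval x

/-- The linear combination `a₁·p₁ + a₂·p₂ + ⋯ + a_m·p_m` of ultrafilters on ℕ. -/
def linComb : ∀ m : ℕ, (Fin m → ℕ) → (Fin m → Ultrafilter ℕ) → Ultrafilter ℕ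
  | 0, _, _ => pure 0
  | m + 1, a, p =>
      uAdd ((p 0).map fun x => a 0 * x)
        (linComb m (fun i => a i.succ) fun i => p i.succ)

theorem mem_uAdd {p q : Ultrafilter ℕ} {A : Set ℕ} :
    A ∈ uAdd p q ↔ ∀ᶠ x in (p : Filter ℕ), ∀ᶠ y in (q : Filter ℕ), x + y ∈ A := Iff.rfl

theorem IsJSet.mono {A B : Set ℕ} (h : IsJSet A) (hAB : A ⊆ B) : IsJSet B := by
  intro F hF
  obtain ⟨a, β, hβ, hf⟩ := h F hF
  exact ⟨a, β, hβ, fun f hfF => hAB (hf f hfF)⟩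

/-- Partition regularity of J-sets, by Hales-Jewett. -/
theorem IsJSet.union {A B : Set ℕ} (h : IsJSet (A ∪ B)) : IsJSet A ∨ IsJSet B := by
  classical
  by_contra hcon
  simp only [IsJSet, not_or, not_forall] at hcon
  obtain ⟨⟨F₁, hF₁, h₁⟩, ⟨F₂, hF₂, h₂⟩⟩ := hcon
  let K := {f : ℕ → ℕ // f ∈ F₁ ∪ F₂}
  obtain ⟨ι, hι, hHJ⟩ := Combinatorics.Line.exists_mono_in_high_dimension K Prop
  have : Encodable ι := Fintype.toEncodable ι
  let e : ℕ × ι → ℕ := Encodable.encode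
  have he : Function.Injective e := Encodable.encode_injective
  let g : (ι → K) → ℕ → ℕ := fun w y => ∑ i, (w i).1 (e (y, i))
  obtain ⟨f₀, hf₀⟩ := hF₁
  let w₀ : ι → K := fun _ => ⟨f₀, Finset.mem_union_left _ hf₀⟩
  obtain ⟨a, β, hβ, hg⟩ := h (Finset.univ.image g) ⟨g w₀, by simp⟩
  obtain ⟨l, c, hc⟩ := hHJ (fun w => a + ∑ t ∈ β, g w t ∈ A)
  let V : Finset ι := Finset.univ.filter fun i => l.idxFun i = none
  have hV : V.Nonempty := by
    obtain ⟨i, hi⟩ := l.proper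
    exact ⟨i, by simp [V, hi]⟩
  let k₀ : K := ⟨f₀, Finset.mem_union_left _ hf₀⟩
  let a' : ℕ := a + ∑ t ∈ β, ∑ i ∈ Vᶜ, (l k₀ i).1 (e (t, i))
  let β' : Finset ℕ := (β ×ˢ V).image e
  have hβ' : β'.Nonempty := (hβ.product hV).image e
  have hval : ∀ k : K, a + ∑ t ∈ β, g (l k) t = a' + ∑ t ∈ β', k.1 t := by
    intro k
    simp only [a', β', g]
    rw [Finset.sum_image (fun x _ y _ h => he h), Finset.sum_product, add_assoc,
      ← Finset.sum_add_distrib]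
    congr 1
    refine Finset.sum_congr rfl fun t _ => ?_
    rw [← Finset.sum_add_sum_compl V, add_comm]
    congr 1
    · refine Finset.sum_congr rfl fun i hi => ?_
      have hi' : l.idxFun i ≠ none := by simpa [V] using hi
      obtain ⟨c, hc⟩ := Option.ne_none_iff_exists'.1 hi'
      rw [l.apply_some hc, l.apply_some hc]
    · refine Finset.sum_congr rfl fun i hi => ?_
      have hi' : l.idxFun i = none := by simpa [V] using hi
      rw [l.apply_none _ _ hi']
  by_cases hcA : c
  · refine h₁ ⟨a', β', hβ', fun f hf => ?_⟩
    have := hc ⟨f, Finset.mem_union_left _ hf⟩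
    simp only [hval] at this
    rw [this]; exact hcA
  · refine h₂ ⟨a', β', hβ', fun f hf => ?_⟩
    have h3 := hc ⟨f, Finset.mem_union_right _ hf⟩
    have h4 := hg (g (l ⟨f, Finset.mem_union_right _ hf⟩)) (by simp)
    simp only [hval] at h3 h4
    refine h4.resolve_left fun h5 => hcA ?_
    rw [← h3]; exact h5

/-- The extension of membership in a tensor power to sets of lists. -/
def Good (p : Ultrafilter ℕ) : ℕ → Set (List ℕ) → Prop
  | 0, B => [] ∈ B
  | k + 1, B => ∀ᶠ x in (p : Filter ℕ), Good p k {l | x :: l ∈ B}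

/-- The lists of the tuples in `A`. -/
def toL {m : ℕ} (A : Set (Fin m → ℕ)) : Set (List ℕ) := {l | ∃ v ∈ A, l = List.ofFn v}

theorem mem_toL {m : ℕ} {A : Set (Fin m → ℕ)} {v : Fin m → ℕ} :
    List.ofFn v ∈ toL A ↔ v ∈ A := by
  constructor
  · rintro ⟨w, hw, h⟩
    rwa [List.ofFn_injective h]
  · intro h
    exact ⟨v, h, rfl⟩

theorem tensor_iff_good (p : Ultrafilter ℕ) : ∀ (m : ℕ) (A : Set (Fin m → ℕ)),
    A ∈ tensor m (fun _ => p) ↔ Good p m (toL A) := by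
  intro m
  induction m with
  | zero =>
    intro A
    rw [Good, ← List.ofFn_zero (f := fun i : Fin 0 => (i.elim0 : ℕ)), mem_toL]
    rfl
  | succ m ih =>
    intro A
    have h1 : A ∈ tensor (m + 1) (fun _ => p) ↔ ∀ᶠ x in (p : Filter ℕ),
        {v : Fin m → ℕ | (Fin.cons x v : Fin (m + 1) → ℕ) ∈ A} ∈ tensor m (fun _ => p) := Iff.rfl
    rw [h1, Good]
    refine Filter.eventually_congr (Filter.Eventually.of_forall fun x => ?_)
    rw [ih]
    have : toL {v : Fin m → ℕ | (Fin.cons x v : Fin (m + 1) → ℕ) ∈ A} = {l | x :: l ∈ toL A} := by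
      ext l
      constructor
      · rintro ⟨v, hv, rfl⟩
        exact ⟨_, hv, by simp [List.ofFn_succ]⟩
      · rintro ⟨w, hw, h⟩
        rw [List.ofFn_succ] at h
        obtain ⟨h1, h2⟩ := List.cons.inj h
        refine ⟨fun i => w i.succ, ?_, h2⟩
        have : (Fin.cons x (fun i => w i.succ) : Fin (m + 1) → ℕ) = w := by
          rw [h1]; exact Fin.cons_self_tail w
        simpa [this] using hw
    rw [this]

/-- States (in reversed order) reachable along a chain of finite sets of functions. -/
inductive Reach (val : Finset (ℕ → ℕ) → (ℕ → ℕ) → ℕ) : Finset (ℕ → ℕ) → List ℕ → Prop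
  | nil : Reach val ∅ []
  | new {F G : Finset (ℕ → ℕ)} {s : List ℕ} {f : ℕ → ℕ} :
      Reach val F s → F ⊂ G → f ∈ G → Reach val G (val G f :: s)
  | add {F G : Finset (ℕ → ℕ)} {x : ℕ} {s : List ℕ} {f : ℕ → ℕ} :
      Reach val F (x :: s) → F ⊂ G → f ∈ G → Reach val G ((x + val G f) :: s)

/-- `Ch val F x G`: `x` is a sum along a chain strictly above `F` with top `G`. -/
inductive Ch (val : Finset (ℕ → ℕ) → (ℕ → ℕ) → ℕ) (F : Finset (ℕ → ℕ)) :
    ℕ → Finset (ℕ → ℕ) → Prop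
  | base {G : Finset (ℕ → ℕ)} {f : ℕ → ℕ} : F ⊂ G → f ∈ G → Ch val F (val G f) G
  | step {x : ℕ} {G K : Finset (ℕ → ℕ)} {f : ℕ → ℕ} :
      Ch val F x G → G ⊂ K → f ∈ K → Ch val F (x + val K f) K

/-- Sums along chains strictly above `F`. -/
def CSet (val : Finset (ℕ → ℕ) → (ℕ → ℕ) → ℕ) (F : Finset (ℕ → ℕ)) : Set ℕ :=
  {x | ∃ G, Ch val F x G}

theorem CSet_anti {val : Finset (ℕ → ℕ) → (ℕ → ℕ) → ℕ} {F F' : Finset (ℕ → ℕ)} (h : F ⊆ F') :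
    CSet val F' ⊆ CSet val F := by
  rintro x ⟨G, hG⟩
  refine ⟨G, ?_⟩
  induction hG with
  | base h1 h2 => exact .base (lt_of_le_of_lt h h1) h2
  | step _ h2 h3 ih => exact .step ih h2 h3

theorem Ch.reach {val : Finset (ℕ → ℕ) → (ℕ → ℕ) → ℕ} {F G : Finset (ℕ → ℕ)} {x : ℕ}
    {s : List ℕ} (hs : Reach val F s) (h : Ch val F x G) : Reach val G (x :: s) := by
  induction h with
  | base h1 h2 => exact .new hs h1 h2
  | step _ h2 h3 ih => exact .add ih h2 h3

theorem Ch.add_mem {val : Finset (ℕ → ℕ) → (ℕ → ℕ) → ℕ} {F G : Finset (ℕ → ℕ)} {x y : ℕ}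
    (h : Ch val F x G) (hy : y ∈ CSet val G) : x + y ∈ CSet val F := by
  obtain ⟨G', hG'⟩ := hy
  refine ⟨G', ?_⟩
  induction hG' with
  | base h1 h2 => exact .step h h1 h2
  | step _ h2 h3 ih => rw [← add_assoc]; exact .step ih h2 h3

/-- The value attached to a set and a function. -/
def valOf (α : Finset (ℕ → ℕ) → ℕ) (H : Finset (ℕ → ℕ) → Finset ℕ)
    (G : Finset (ℕ → ℕ)) (f : ℕ → ℕ) : ℕ := α G + ∑ t ∈ H G, f t

theorem CSet_isJSet (α : Finset (ℕ → ℕ) → ℕ) (H : Finset (ℕ → ℕ) → Finset ℕ)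
    (hH : ∀ F : Finset (ℕ → ℕ), F.Nonempty → (H F).Nonempty) (F : Finset (ℕ → ℕ)) :
    IsJSet (CSet (valOf α H) F) := by
  classical
  intro E hE
  obtain ⟨g, hg⟩ := Infinite.exists_notMem_finset F
  have hss : F ⊂ insert g (F ∪ E) := by
    refine Finset.ssubset_iff_subset_ne.2 ⟨fun x hx => by simp [hx], fun h => hg ?_⟩
    rw [h]; simp
  exact ⟨α (insert g (F ∪ E)), H (insert g (F ∪ E)), hH _ (by simp),
    fun f hf => ⟨_, Ch.base (val := valOf α H) hss (by simp [hf])⟩⟩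

theorem memJ_add {p q : Ultrafilter ℕ} (hq : MemJ q) : MemJ (uAdd p q) := by
  intro A hA F hF
  obtain ⟨x, hx⟩ := (mem_uAdd.1 hA).exists
  obtain ⟨a, β, hβ, h⟩ := hq _ hx F hF
  exact ⟨x + a, β, hβ, fun f hf => by rw [add_assoc]; exact h f hf⟩

theorem exists_idem (C : Finset (ℕ → ℕ) → Set ℕ) (hanti : ∀ F F', F ⊆ F' → C F' ⊆ C F)
    (hJ : ∀ F, IsJSet (C F))
    (hadd : ∀ F, ∀ x ∈ C F, ∃ G, ∀ y ∈ C G, x + y ∈ C F) :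
    ∃ p : Ultrafilter ℕ, IdempotentUF p ∧ MemJ p ∧ ∀ F, C F ∈ p := by
  classical
  let _ : AddSemigroup (Ultrafilter ℕ) := Ultrafilter.addSemigroup
  have hempty : ¬ IsJSet ∅ := by
    intro h
    obtain ⟨a, β, -, h⟩ := h {0} (by simp)
    simpa using h 0
  let 𝓖 : Filter ℕ :=
    { sets := {B | ∃ F, ¬ IsJSet (C F \ B)}
      univ_sets := ⟨∅, by simpa using hempty⟩
      sets_of_superset := by
        rintro B B' ⟨F, hF⟩ hBB
        exact ⟨F, fun h => hF (h.mono (Set.diff_subset_diff_right hBB))⟩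
      inter_sets := by
        rintro B B' ⟨F, hF⟩ ⟨F', hF'⟩
        refine ⟨F ∪ F', fun h => ?_⟩
        have hsub : C (F ∪ F') \ (B ∩ B') ⊆ (C F \ B) ∪ (C F' \ B') := by
          rintro x ⟨hx, hxB⟩
          by_cases hb : x ∈ B
          · exact Or.inr ⟨hanti _ _ Finset.subset_union_right hx, fun hb' => hxB ⟨hb, hb'⟩⟩
          · exact Or.inl ⟨hanti _ _ Finset.subset_union_left hx, hb⟩
        rcases (h.mono hsub).union with h | h
        · exact hF h
        · exact hF' h }
  have hne : 𝓖.NeBot := by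
    refine ⟨fun h => ?_⟩
    have : (∅ : Set ℕ) ∈ 𝓖 := by rw [h]; trivial
    obtain ⟨F, hF⟩ := this
    exact hF (by simpa using hJ F)
  let K : Set (Ultrafilter ℕ) := {p | MemJ p ∧ ∀ F, C F ∈ p}
  have hKne : K.Nonempty := by
    refine ⟨Ultrafilter.of 𝓖, fun A hA => ?_, fun F => ?_⟩
    · by_contra hAJ
      have : Aᶜ ∈ Ultrafilter.of 𝓖 := Ultrafilter.of_le 𝓖
        ⟨∅, fun h => hAJ (h.mono (fun x hx => by simpa using hx.2))⟩
      exact Ultrafilter.compl_mem_iff_notMem.1 this hA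
    · exact Ultrafilter.of_le 𝓖 ⟨F, by simpa using hempty⟩
  have hKc : IsClosed K := by
    have : K = (⋂ (A : Set ℕ) (_ : ¬ IsJSet A), {p : Ultrafilter ℕ | Aᶜ ∈ p}) ∩
        ⋂ F, {p : Ultrafilter ℕ | C F ∈ p} := by
      ext p
      simp only [K, MemJ, Set.mem_setOf_eq, Set.mem_inter_iff, Set.mem_iInter,
        Ultrafilter.compl_mem_iff_notMem]
      refine and_congr_left fun _ => forall_congr' fun A => ?_
      tauto
    rw [this]
    exact (isClosed_iInter fun A => isClosed_iInter fun _ => ultrafilter_isClosed_basic _).inter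
      (isClosed_iInter fun A => ultrafilter_isClosed_basic _)
  have hadd' : ∀ p q : Ultrafilter ℕ, p + q = uAdd p q := by
    intro p q
    refine Ultrafilter.ext fun A => ?_
    exact (Ultrafilter.eventually_add p q (· ∈ A))
  obtain ⟨p, hpK, hp⟩ := exists_idempotent_in_compact_add_subsemigroup
    (fun r : Ultrafilter ℕ => Ultrafilter.continuous_add_left r) K hKne hKc.isCompact
    (by
      intro p hp q hq
      rw [hadd']
      refine ⟨memJ_add hq.1, fun F => ?_⟩
      rw [mem_uAdd]
      filter_upwards [hp.2 F] with x hx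
      obtain ⟨G, hG⟩ := hadd F x hx
      filter_upwards [hq.2 G] with y hy using hG y hy)
  exact ⟨p, by rw [IdempotentUF, ← hadd', hp], hpK.1, hpK.2⟩

theorem good_of_reach {p : Ultrafilter ℕ} {val : Finset (ℕ → ℕ) → (ℕ → ℕ) → ℕ} {m : ℕ}
    {B : Set (List ℕ)} (hp : ∀ F, CSet val F ∈ p)
    (hB : ∀ G s, Reach val G s → s.length = m → s.reverse ∈ B) :
    ∀ k G s, Reach val G s → s.length + k = m → Good p k {l | s.reverseAux l ∈ B} := by
  intro k
  induction k with
  | zero =>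
    intro G s hs hk
    exact hB G s hs hk
  | succ k ih =>
    intro G s hs hk
    rw [Good]
    filter_upwards [hp G] with x hx
    obtain ⟨G', hG'⟩ := hx
    exact ih G' (x :: s) (hG'.reach hs) (by simp; omega)

/-- Reachable states come from chains indexed by natural numbers. -/
theorem reach_chain {val : Finset (ℕ → ℕ) → (ℕ → ℕ) → ℕ} {F : Finset (ℕ → ℕ)} {s : List ℕ}
    (h : Reach val F s) :
    ∃ (n : ℕ) (G : ℕ → Finset (ℕ → ℕ)) (f : ℕ → ℕ → ℕ) (β : ℕ → Finset ℕ),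
      s.length ≤ n ∧ (∀ i < n, G i ⊆ F) ∧ (∀ j < n, ∀ i < j, G i ⊂ G j) ∧
      (∀ i < n, f i ∈ G i) ∧
      (∀ l < s.length, (β l).Nonempty ∧ ∀ x ∈ β l, x < n) ∧
      (∀ l' < s.length, ∀ l < l', ∀ x ∈ β l, ∀ y ∈ β l', x < y) ∧
      s.reverse = (List.range s.length).map fun l => ∑ i ∈ β l, val (G i) (f i) := by
  induction h with
  | nil => exact ⟨0, fun _ => ∅, fun _ => 0, fun _ => ∅, by simp⟩
  | @new F G' s f' hr hss hf' ih =>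
    obtain ⟨n, G, f, β, h1, h2, h3, h4, h5, h6, h7⟩ := ih
    refine ⟨n + 1, Function.update G n G', Function.update f n f',
      Function.update β s.length {n}, ?_, ?_, ?_, ?_, ?_, ?_, ?_⟩
    · simpa using h1
    · intro i hi
      rcases Nat.lt_succ_iff_lt_or_eq.1 hi with hi | rfl
      · rw [Function.update_of_ne hi.ne]; exact (h2 i hi).trans hss.subset
      · simp
    · intro j hj i hij
      rcases Nat.lt_succ_iff_lt_or_eq.1 hj with hj | rfl
      · rw [Function.update_of_ne hj.ne, Function.update_of_ne (hij.trans hj).ne]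
        exact h3 j hj i hij
      · rw [Function.update_self, Function.update_of_ne hij.ne]
        exact lt_of_le_of_lt (h2 i hij) hss
    · intro i hi
      rcases Nat.lt_succ_iff_lt_or_eq.1 hi with hi | rfl
      · rw [Function.update_of_ne hi.ne, Function.update_of_ne hi.ne]; exact h4 i hi
      · simpa using hf'
    · intro l hl
      rcases Nat.lt_succ_iff_lt_or_eq.1 hl with hl | rfl
      · rw [Function.update_of_ne hl.ne]
        exact ⟨(h5 l hl).1, fun x hx => ((h5 l hl).2 x hx).trans (Nat.lt_succ_self n)⟩
      · simp
    · intro l' hl' l hll x hx y hy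
      rcases Nat.lt_succ_iff_lt_or_eq.1 hl' with hl' | rfl
      · rw [Function.update_of_ne (hll.trans hl').ne] at hx
        rw [Function.update_of_ne hl'.ne] at hy
        exact h6 l' hl' l hll x hx y hy
      · rw [Function.update_of_ne hll.ne] at hx
        rw [Function.update_self, Finset.mem_singleton] at hy
        rw [hy]; exact (h5 l hll).2 x hx
    · rw [List.reverse_cons, List.length_cons, List.range_succ, List.map_append, h7]
      congr 1
      · refine List.map_congr_left fun l hl => ?_
        have hl := List.mem_range.1 hl
        rw [Function.update_of_ne hl.ne]
        refine Finset.sum_congr rfl fun i hi => ?_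
        have hi := (h5 l hl).2 i hi
        rw [Function.update_of_ne hi.ne, Function.update_of_ne hi.ne]
      · simp
  | @add F G' x s f' hr hss hf' ih =>
    obtain ⟨n, G, f, β, h1, h2, h3, h4, h5, h6, h7⟩ := ih
    simp only [List.length_cons] at h1 h5 h6 h7 ⊢
    have hn : n ∉ β s.length := fun h => lt_irrefl _ ((h5 s.length (by omega)).2 n h)
    refine ⟨n + 1, Function.update G n G', Function.update f n f',
      Function.update β s.length (insert n (β s.length)), ?_, ?_, ?_, ?_, ?_, ?_, ?_⟩
    · omega
    · intro i hi
      rcases Nat.lt_succ_iff_lt_or_eq.1 hi with hi | rfl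
      · rw [Function.update_of_ne hi.ne]; exact (h2 i hi).trans hss.subset
      · simp
    · intro j hj i hij
      rcases Nat.lt_succ_iff_lt_or_eq.1 hj with hj | rfl
      · rw [Function.update_of_ne hj.ne, Function.update_of_ne (hij.trans hj).ne]
        exact h3 j hj i hij
      · rw [Function.update_self, Function.update_of_ne hij.ne]
        exact lt_of_le_of_lt (h2 i hij) hss
    · intro i hi
      rcases Nat.lt_succ_iff_lt_or_eq.1 hi with hi | rfl
      · rw [Function.update_of_ne hi.ne, Function.update_of_ne hi.ne]; exact h4 i hi
      · simpa using hf'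
    · intro l hl
      have h5l := h5 l hl
      rcases Nat.lt_succ_iff_lt_or_eq.1 hl with hl | rfl
      · rw [Function.update_of_ne hl.ne]
        exact ⟨h5l.1, fun x hx => (h5l.2 x hx).trans (Nat.lt_succ_self n)⟩
      · rw [Function.update_self]
        refine ⟨by simp, fun x hx => ?_⟩
        rcases Finset.mem_insert.1 hx with rfl | hx
        · omega
        · exact (h5l.2 x hx).trans (Nat.lt_succ_self n)
    · intro l' hl' l hll x hx y hy
      rw [Function.update_of_ne (by omega)] at hx
      have h6l := h6 l' hl' l hll x hx
      rcases Nat.lt_succ_iff_lt_or_eq.1 hl' with hl' | rfl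
      · rw [Function.update_of_ne hl'.ne] at hy
        exact h6l y hy
      · rw [Function.update_self] at hy
        rcases Finset.mem_insert.1 hy with rfl | hy
        · exact (h5 l (by omega)).2 x hx
        · exact h6l y hy
    · rw [List.reverse_cons, List.range_succ, List.map_append] at h7
      obtain ⟨h8, h9⟩ := List.append_inj' h7 (by simp)
      rw [List.reverse_cons, List.range_succ, List.map_append, h8]
      simp only [List.map_cons, List.map_nil, List.cons.injEq, and_true] at h9
      congr 1
      · refine List.map_congr_left fun l hl => ?_
        have hl := List.mem_range.1 hl
        rw [Function.update_of_ne hl.ne]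
        refine Finset.sum_congr rfl fun i hi => ?_
        have hi := (h5 l (by omega)).2 i hi
        rw [Function.update_of_ne hi.ne, Function.update_of_ne hi.ne]
      · simp only [List.map_cons, List.map_nil, List.cons.injEq, and_true, Function.update_self]
        rw [Finset.sum_insert hn, Function.update_self, Function.update_self, add_comm, h9]
        congr 1
        refine Finset.sum_congr rfl fun i hi => ?_
        have hi := (h5 s.length (by omega)).2 i hi
        rw [Function.update_of_ne hi.ne, Function.update_of_ne hi.ne]

theorem block_reach {val : Finset (ℕ → ℕ) → (ℕ → ℕ) → ℕ} {n : ℕ} {G : Fin n → Finset (ℕ → ℕ)}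
    {f : Fin n → ℕ → ℕ} (hG : ∀ i j, i < j → G i ⊂ G j) (hf : ∀ i, f i ∈ G i)
    {F : Finset (ℕ → ℕ)} {s : List ℕ} (hs : Reach val F s) (γ : Finset (Fin n)) :
    γ.Nonempty → (∀ i ∈ γ, F ⊂ G i) →
    ∃ j ∈ γ, Reach val (G j) ((∑ i ∈ γ, val (G i) (f i)) :: s) := by
  classical
  induction γ using Finset.induction_on_max with
  | empty => intro h; simp at h
  | insert a γ hmax ih =>
    intro _ hF
    have ha : a ∉ γ := fun h => lt_irrefl _ (hmax a h)
    refine ⟨a, by simp, ?_⟩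
    rcases γ.eq_empty_or_nonempty with rfl | hne
    · simpa using Reach.new hs (hF a (by simp)) (hf a)
    · obtain ⟨j, hj, hr⟩ := ih hne (fun i hi => hF i (by simp [hi]))
      rw [Finset.sum_insert ha, add_comm]
      exact Reach.add hr (hG _ _ (hmax j hj)) (hf a)

theorem blocks_reach {val : Finset (ℕ → ℕ) → (ℕ → ℕ) → ℕ} {m n : ℕ}
    {G : Fin n → Finset (ℕ → ℕ)} {f : Fin n → ℕ → ℕ} (hne : ∀ i, (G i).Nonempty)
    (hG : ∀ i j, i < j → G i ⊂ G j) (hf : ∀ i, f i ∈ G i)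
    {β : Fin m → Finset (Fin n)} (hβ : ∀ l, (β l).Nonempty)
    (hlt : ∀ l l' : Fin m, l < l' → ∀ x ∈ β l, ∀ y ∈ β l', x < y) :
    ∃ F, Reach val F (List.ofFn fun l => ∑ i ∈ β l, val (G i) (f i)).reverse := by
  have key : ∀ k ≤ m, ∃ F, Reach val F
      ((List.ofFn fun l => ∑ i ∈ β l, val (G i) (f i)).take k).reverse ∧
      ∀ l : Fin m, k ≤ l.1 → ∀ i ∈ β l, F ⊂ G i := by
    intro k
    induction k with
    | zero =>
      intro _
      exact ⟨∅, by simpa using Reach.nil, fun l _ i _ => Finset.empty_ssubset.2 (hne i)⟩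
    | succ k ih =>
      intro hk
      obtain ⟨F, hF, hF'⟩ := ih (by omega)
      obtain ⟨j, hj, hr⟩ := block_reach hG hf hF (β ⟨k, hk⟩) (hβ _) (hF' ⟨k, hk⟩ le_rfl)
      refine ⟨G j, ?_, fun l hl i hi => hG _ _ (hlt ⟨k, hk⟩ l hl j hj i hi)⟩
      rw [List.take_succ_eq_append_getElem (by simpa using hk)]
      simpa using hr
  obtain ⟨F, hF, -⟩ := key m le_rfl
  exact ⟨F, by rwa [List.take_of_length_le (by simp)] at hF⟩

theorem IsJSet.large {A : Set ℕ} (h : IsJSet A) (F : Finset (ℕ → ℕ)) (N : ℕ) :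
    ∃ (a : ℕ) (β : Finset ℕ), β.Nonempty ∧ (∀ t ∈ β, N < t) ∧ ∀ f ∈ F, a + ∑ t ∈ β, f t ∈ A := by
  classical
  obtain ⟨a, β, hβ, hf⟩ := h (insert 0 (F.image fun f t => f (t + (N + 1)))) (by simp)
  refine ⟨a, β.map (addRightEmbedding (N + 1)), by simpa using hβ, ?_, fun f hfF => ?_⟩
  · intro t ht
    simp only [Finset.mem_map, addRightEmbedding_apply] at ht
    obtain ⟨u, -, rfl⟩ := ht
    omega
  · simpa using hf (fun t => f (t + (N + 1))) (by
      rw [Finset.mem_insert, Finset.mem_image]; exact Or.inr ⟨f, hfF, rfl⟩)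

/-- A Galvin-type invariant set of states. -/
theorem exists_states {p : Ultrafilter ℕ} (hp : IdempotentUF p) {m : ℕ} {B : Set (List ℕ)}
    (hB : Good p m B) :
    ∃ S : Set (List ℕ), [] ∈ S ∧
      (∀ s ∈ S, s.length < m → ∀ᶠ y in (p : Filter ℕ), (y :: s) ∈ S) ∧
      (∀ x s, (x :: s) ∈ S → ∀ᶠ y in (p : Filter ℕ), ((x + y) :: s) ∈ S) ∧
      (∀ s ∈ S, s.length = m → s.reverse ∈ B) := by
  let Gd : List ℕ → Prop := fun s => Good p (m - s.length) {l | s.reverseAux l ∈ B}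
  have hidem : ∀ {P : ℕ → Prop}, (∀ᶠ x in (p : Filter ℕ), P x) →
      ∀ᶠ x in (p : Filter ℕ), ∀ᶠ y in (p : Filter ℕ), P (x + y) := by
    intro P h
    have : {x | P x} ∈ uAdd p p := by rw [show uAdd p p = p from hp]; exact h
    exact mem_uAdd.1 this
  have hGd : ∀ s, Gd s → s.length < m → ∀ᶠ y in (p : Filter ℕ), Gd (y :: s) := by
    intro s hs hl
    have hk : m - s.length = (m - (s.length + 1)) + 1 := by omega
    simp only [Gd] at hs
    rw [hk, Good] at hs
    exact hs
  refine ⟨{s | Gd s ∧ ∀ x t, s = x :: t → ∀ᶠ y in (p : Filter ℕ), Gd ((x + y) :: t)},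
    ⟨by simpa [Gd] using hB, by simp⟩, ?_, ?_, ?_⟩
  · rintro s ⟨hs, -⟩ hl
    filter_upwards [hGd s hs hl, hidem (hGd s hs hl)] with y h1 h2
    refine ⟨h1, fun x t h => ?_⟩
    obtain ⟨rfl, rfl⟩ := List.cons.inj h
    exact h2
  · rintro x s ⟨hs, hs'⟩
    have := hs' x s rfl
    filter_upwards [this, hidem this] with y h1 h2
    refine ⟨h1, fun x' t h => ?_⟩
    obtain ⟨rfl, rfl⟩ := List.cons.inj h
    simpa only [add_assoc] using h2
  · rintro s ⟨hs, -⟩ hl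
    simpa [Gd, hl, Good] using hs

/-- The recursive construction. -/
theorem exists_construction {p : Ultrafilter ℕ} (hJ : MemJ p) {m : ℕ} {S : Set (List ℕ)}
    (h0 : [] ∈ S)
    (h1 : ∀ s ∈ S, s.length < m → ∀ᶠ y in (p : Filter ℕ), (y :: s) ∈ S)
    (h2 : ∀ x s, (x :: s) ∈ S → ∀ᶠ y in (p : Filter ℕ), ((x + y) :: s) ∈ S) :
    ∃ (α : Finset (ℕ → ℕ) → ℕ) (H : Finset (ℕ → ℕ) → Finset ℕ),
      (∀ F, (H F).Nonempty) ∧ (∀ F G, F ⊂ G → ∀ x ∈ H F, ∀ y ∈ H G, x < y) ∧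
      ∀ F s, Reach (valOf α H) F s → s.length ≤ m → s ∈ S := by
  classical
  let D := ℕ × Finset ℕ × Finset (List ℕ)
  let Spec : (F : Finset (ℕ → ℕ)) → ((G : Finset (ℕ → ℕ)) → G ⊂ F → D) → D → Prop :=
    fun F ih d => d.2.1.Nonempty ∧
      (∀ G (h : G ⊂ F), ∀ x ∈ (ih G h).2.1, ∀ y ∈ d.2.1, x < y) ∧
      [] ∈ d.2.2 ∧ (∀ s ∈ d.2.2, s ∈ S) ∧
      (∀ G (h : G ⊂ F), ∀ s ∈ (ih G h).2.2, s.length < m → ∀ f ∈ F,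
        ((d.1 + ∑ t ∈ d.2.1, f t) :: s) ∈ d.2.2) ∧
      (∀ G (h : G ⊂ F), ∀ x s, (x :: s) ∈ (ih G h).2.2 → ∀ f ∈ F,
        ((x + (d.1 + ∑ t ∈ d.2.1, f t)) :: s) ∈ d.2.2)
  let step : (F : Finset (ℕ → ℕ)) → ((G : Finset (ℕ → ℕ)) → G ⊂ F → D) → D :=
    fun F ih => if h : ∃ d, Spec F ih d then h.choose else (0, ∅, ∅)
  have wf : WellFounded (fun F G : Finset (ℕ → ℕ) => F ⊂ G) := Finset.isWellFounded_ssubset.wf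
  let d : Finset (ℕ → ℕ) → D := wf.fix step
  have hspec : ∀ F, Spec F (fun G _ => d G) (d F) := by
    intro F
    induction F using wf.induction with
    | _ F ih =>
    have hd : d F = step F (fun G _ => d G) := wf.fix_eq step F
    suffices h : ∃ e, Spec F (fun G _ => d G) e by
      rw [hd]
      simp only [step]
      rw [dif_pos h]
      exact h.choose_spec
    -- all earlier states
    let P : Finset (List ℕ) := F.ssubsets.biUnion fun G => (d G).2.2
    have hP : ∀ s ∈ P, s ∈ S := by
      intro s hs
      simp only [P, Finset.mem_biUnion, Finset.mem_ssubsets] at hs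
      obtain ⟨G, hG, hs⟩ := hs
      exact (ih G hG).2.2.2.1 s hs
    have hPm : ∀ G, G ⊂ F → ∀ s ∈ (d G).2.2, s ∈ P := fun G hG s hs =>
      Finset.mem_biUnion.2 ⟨G, Finset.mem_ssubsets.2 hG, hs⟩
    let N : ℕ := (F.ssubsets.biUnion fun G => (d G).2.1).sup id
    have hN : ∀ G, G ⊂ F → ∀ x ∈ (d G).2.1, x ≤ N := fun G hG x hx =>
      Finset.le_sup (f := id) (Finset.mem_biUnion.2 ⟨G, Finset.mem_ssubsets.2 hG, hx⟩)
    have hev : ∀ᶠ y in (p : Filter ℕ), ∀ s ∈ P, (s.length < m → (y :: s) ∈ S) ∧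
        ∀ x ∈ s.head?, ((x + y) :: s.tail) ∈ S := by
      rw [Filter.eventually_all_finset]
      intro s hs
      refine Filter.Eventually.and ?_ ?_
      · by_cases hl : s.length < m
        · simpa [hl] using h1 s (hP s hs) hl
        · simp [hl]
      · cases s with
        | nil => simp
        | cons x t => simpa using h2 x t (hP _ hs)
    obtain ⟨a, β, hβ, hβN, hf⟩ := (hJ _ hev).large F N
    let R : Finset (List ℕ) := insert [] (
      (((P.filter fun s => s.length < m) ×ˢ F).image
        fun q => (a + ∑ t ∈ β, q.2 t) :: q.1) ∪
      (((P.filter fun s => s ≠ []) ×ˢ F).image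
        fun q => (q.1.headD 0 + (a + ∑ t ∈ β, q.2 t)) :: q.1.tail))
    refine ⟨(a, β, R), hβ, ?_, by simp [R], ?_, ?_, ?_⟩
    · intro G hG x hx y hy
      exact lt_of_le_of_lt (hN G hG x hx) (hβN y hy)
    · intro s hs
      simp only [R, Finset.mem_insert, Finset.mem_union, Finset.mem_image, Finset.mem_product,
        Finset.mem_filter] at hs
      rcases hs with rfl | ⟨⟨s, f⟩, ⟨⟨hs, hl⟩, hfF⟩, rfl⟩ | ⟨⟨s, f⟩, ⟨⟨hs, hl⟩, hfF⟩, rfl⟩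
      · exact h0
      · exact (hf f hfF s hs).1 hl
      · cases s with
        | nil => exact absurd rfl hl
        | cons x t => exact (hf f hfF _ hs).2 x (by simp)
    · intro G hG s hs hl f hfF
      simp only [R, Finset.mem_insert, Finset.mem_union, Finset.mem_image, Finset.mem_product,
        Finset.mem_filter]
      exact Or.inr (Or.inl ⟨(s, f), ⟨⟨hPm G hG s hs, hl⟩, hfF⟩, rfl⟩)
    · intro G hG x s hs f hfF
      simp only [R, Finset.mem_insert, Finset.mem_union, Finset.mem_image, Finset.mem_product,
        Finset.mem_filter]
      exact Or.inr (Or.inr ⟨(x :: s, f), ⟨⟨hPm G hG _ hs, by simp⟩, hfF⟩, rfl⟩)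
  refine ⟨fun F => (d F).1, fun F => (d F).2.1, fun F => (hspec F).1,
    fun F G h => (hspec G).2.1 F h, ?_⟩
  intro F s hr hl
  refine (hspec F).2.2.2.1 s ?_
  induction hr with
  | nil => exact (hspec ∅).2.2.1
  | new hr hss hf ih =>
    simp only [List.length_cons] at hl
    exact (hspec _).2.2.2.2.1 _ hss _ (ih (by omega)) (by omega) _ hf
  | add hr hss hf ih =>
    exact (hspec _).2.2.2.2.2 _ hss _ _ (ih (by simpa using hl)) _ hf

/-- Multidimensional Stronger Central Sets Theorem I (finitary form). -/
theorem multidimensional_stronger_CST_I (m : ℕ) (hm : 1 ≤ m) (A : Set (Fin m → ℕ)) :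
    (∃ (α : Finset (ℕ → ℕ) → ℕ) (H : Finset (ℕ → ℕ) → Finset ℕ),
      (∀ F : Finset (ℕ → ℕ), F.Nonempty → (H F).Nonempty) ∧
      (∀ F G : Finset (ℕ → ℕ), F.Nonempty → F ⊂ G →
        ∀ x ∈ H F, ∀ y ∈ H G, x < y) ∧
      (∀ n : ℕ, m ≤ n → ∀ G : Fin n → Finset (ℕ → ℕ),
        (∀ i, (G i).Nonempty) → (∀ i j, i < j → G i ⊂ G j) →
        ∀ f : Fin n → ℕ → ℕ, (∀ i, f i ∈ G i) →
        ∀ β : Fin m → Finset (Fin n),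
          (∀ l, (β l).Nonempty) →
          (∀ l l' : Fin m, l < l' → ∀ x ∈ β l, ∀ y ∈ β l', x < y) →
          (fun l => ∑ i ∈ β l, (α (G i) + ∑ t ∈ H (G i), f i t)) ∈ A))
    ↔
    (∃ p : Ultrafilter ℕ, IdempotentUF p ∧ MemJ p ∧ A ∈ tensor m fun _ => p) := by
  constructor
  · rintro ⟨α, H, hH, -, hb⟩
    obtain ⟨p, hp, hJ, hC⟩ := exists_idem (CSet (valOf α H)) (fun F F' h => CSet_anti h)
      (CSet_isJSet α H hH) (fun F x ⟨G, hG⟩ => ⟨G, fun y hy => hG.add_mem hy⟩)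
    refine ⟨p, hp, hJ, (tensor_iff_good p m A).2 ?_⟩
    refine good_of_reach (m := m) (B := toL A) hC ?_ m ∅ [] Reach.nil (by simp)
    intro F s hs hlen
    obtain ⟨n, G, f, β, hn, -, hG, hf, hβ, hlt, hsum⟩ := reach_chain hs
    rw [hlen] at hn hβ hlt hsum
    have hbb := hb n hn (fun i => G i) (fun i => ⟨f i, hf i i.2⟩) (fun i j hij => hG j j.2 i hij)
      (fun i => f i) (fun i => hf i i.2)
      (fun l => Finset.univ.filter fun i : Fin n => i.1 ∈ β l) ?_ ?_
    · rw [← mem_toL] at hbb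
      convert hbb using 1
      rw [hsum]
      apply List.ext_getElem
      · simp
      · intro l h1 h2
        simp only [List.length_map, List.length_range] at h1
        simp only [List.getElem_map, List.getElem_range, List.getElem_ofFn, valOf]
        symm
        refine Finset.sum_bij (fun i _ => i.1) ?_ ?_ ?_ ?_
        · intro i hi; simpa using hi
        · intro i _ j _ h; exact Fin.ext h
        · intro b hb'
          exact ⟨⟨b, (hβ l h1).2 b hb'⟩, by simpa using hb', rfl⟩
        · intro i _; rfl
    · intro l
      obtain ⟨x, hx⟩ := (hβ l l.2).1
      exact ⟨⟨x, (hβ l l.2).2 x hx⟩, by simpa using hx⟩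
    · intro l l' hll x hx y hy
      simp only [Finset.mem_filter, Finset.mem_univ, true_and] at hx hy
      exact hlt l' l'.2 l hll x hx y hy
  · rintro ⟨p, hp, hJ, hA⟩
    obtain ⟨S, h0, h1, h2, h3⟩ := exists_states hp ((tensor_iff_good p m A).1 hA)
    obtain ⟨α, H, hH, hlt, hR⟩ := exists_construction hJ h0 h1 h2
    refine ⟨α, H, fun F _ => hH F, fun F G _ h => hlt F G h, ?_⟩
    intro n hn G hne hG f hf β hβ hββ
    obtain ⟨F, hF⟩ := blocks_reach (val := valOf α H) hne hG hf hβ hββ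
    have := h3 _ (hR F _ hF (by simp)) (by simp)
    rw [List.reverse_reverse, mem_toL] at this
    exact this

end MultiCST
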